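/- Let G be a finite group, H a finite abelian group, k a field of characteristic 0, α' : G × G → H a normalized 2-cocycle (α'(g,h)·α'(g*h,l) = α'(h,l)·α'(g,h*l), α'(e,e) = e_H), χ : H → kˣ a group homomorphism, and set α := χ ∘ α' (a normalized 2-cocycle with values in kˣ). Let G^{α'} be the central extension with underlying set H × G and multiplication (a,g)·(a',g') = (a·a'·α'(g,g'), g·g'). Let A be a G-Frobenius algebra over k, and define A^{α'} := ⊕_{(a,g) ∈ H×G} A_g ⊗ k·a with multiplication (x⊗a)·(y⊗a') := (x·y) ⊗ (a·a'·α'(g,g')) for x ∈ A_g, y ∈ A_{g'}. Define i : A → A^{α'} by i(x) = x ⊗ e_H, and res : A^{α'} → A by res(x ⊗ a) = χ(a)·x. Then: (i) A^{α'} is a G^{α'}-graded associative unital k-algebra with unit 1 ⊗ e_H; (ii) for all homogeneous x ∈ A_g, y ∈ A_{g'}: res(i(x)·i(y)) = α(g,g')·(x·y), i.e. res ∘ μ^{α'} ∘ (i ⊗ i) equals the multiplication of the discrete-torsion twist A_α of A (in which a ∘^α b = α(g,g')·(a∘b)); so the twist A_α lifts to the G^{α'}-Frobenius algebra A^{α'}.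 -/

import Mathlib

/-- A `G`-Frobenius algebra over a field `k` of characteristic zero (Kaufmann):
a finite-dimensional `G`-graded `k`-vector space `A = ⊕_g A_g` (the grading given by
submodules together with the projections onto them), with an associative bilinear
multiplication respecting the grading, unit `1 ∈ A_e`, a nondegenerate graded invariant
bilinear form `η`, a `G`-action `φ` by algebra automorphisms with
`φ_g(A_h) ⊆ A_{g h g⁻¹}`, and a character `χ : G → kˣ`, satisfying twisted
commutativity, projective self-invariance, projective invariance of the metric and the
projective trace axiom. -/
structure GFrobeniusAlgebra (G : Type) [Group G] [Fintype G]
    (k : Type) [Field k] [CharZero k]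
    (A : Type) [AddCommGroup A] [Module k A] : Type where
  grading : G → Submodule k A
  proj : G → A →ₗ[k] A
  proj_mem : ∀ (g : G) (a : A), proj g a ∈ grading g
  proj_of_mem : ∀ (g : G), ∀ a ∈ grading g, proj g a = a
  proj_of_ne : ∀ (g h : G), g ≠ h → ∀ a ∈ grading g, proj h a = 0
  sum_proj : ∀ a : A, (∑ g : G, proj g a) = a
  finiteDim : FiniteDimensional k A
  mul : A →ₗ[k] A →ₗ[k] A
  mul_assoc' : ∀ a b c : A, mul (mul a b) c = mul a (mul b c)
  one : A
  one_mem : one ∈ grading 1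
  one_mul' : ∀ a : A, mul one a = a
  mul_one' : ∀ a : A, mul a one = a
  mul_mem : ∀ (g h : G), ∀ a ∈ grading g, ∀ b ∈ grading h, mul a b ∈ grading (g * h)
  η : A →ₗ[k] A →ₗ[k] k
  η_nondeg : ∀ a : A, (∀ b : A, η a b = 0) → a = 0
  η_graded : ∀ (g h : G), g * h ≠ 1 → ∀ a ∈ grading g, ∀ b ∈ grading h, η a b = 0
  η_invariant : ∀ a b c : A, η a (mul b c) = η (mul a b) c
  φ : G → A →ₗ[k] A
  φ_one : φ 1 = LinearMap.id
  φ_mul : ∀ g h : G, φ (g * h) = φ g ∘ₗ φ h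
  φ_algebra : ∀ (g : G) (a b : A), φ g (mul a b) = mul (φ g a) (φ g b)
  φ_unit : ∀ g : G, φ g one = one
  φ_grading : ∀ (g h : G), ∀ a ∈ grading h, φ g a ∈ grading (g * h * g⁻¹)
  χ : G →* kˣ
  twisted_comm : ∀ (g : G), ∀ a ∈ grading g, ∀ b : A, mul a b = mul (φ g b) a
  self_invariance : ∀ (g : G), ∀ a ∈ grading g, φ g a = (((χ g)⁻¹ : kˣ) : k) • a
  metric_invariance : ∀ (g : G) (a b : A),
    η (φ g a) (φ g b) = ((((χ g)⁻¹ : kˣ) : k)) ^ 2 * η a b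
  trace_axiom : ∀ (g h : G), ∀ c ∈ grading (g * h * g⁻¹ * h⁻¹),
    ((χ h : kˣ) : k) * LinearMap.trace k A (proj g ∘ₗ mul c ∘ₗ φ h ∘ₗ proj g)
      = ((χ g⁻¹ : kˣ) : k) * LinearMap.trace k A (proj h ∘ₗ φ g⁻¹ ∘ₗ mul c ∘ₗ proj h)

/-- The multiplication of the crossed product `A^{α'} = A #_{α'} k[H] = ⊕_{(a,g)} A_g ⊗ k·a`
(encoded as functions `H → A`, the `(a,g)`-component living at position `a` in degree `g`):
`(x ⊗ a)·(y ⊗ a') = (x·y) ⊗ (a·a'·α'(g,g'))` for `x ∈ A_g`, `y ∈ A_{g'}`. -/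
noncomputable def crossedMul {G : Type} [Group G] [Fintype G] {H : Type} [CommGroup H]
    [Fintype H] [DecidableEq H] {k : Type} [Field k] [CharZero k]
    {A : Type} [AddCommGroup A] [Module k A] (F : GFrobeniusAlgebra G k A)
    (α' : G → G → H) (f f' : H → A) : H → A := fun b =>
  ∑ a : H, ∑ a' : H, ∑ g : G, ∑ g' : G,
    if a * a' * α' g g' = b then F.mul (F.proj g (f a)) (F.proj g' (f' a')) else 0

/-- The `G^{α'}`-grading of the crossed product `A^{α'}`: the component of degree
`(a, g) ∈ H × G = G^{α'}` is `A_g ⊗ k·a`, i.e. functions supported at `a` with value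
in `A_g`. -/
noncomputable def crossedGrading {G : Type} [Group G] [Fintype G] {H : Type} [CommGroup H]
    {k : Type} [Field k] [CharZero k]
    {A : Type} [AddCommGroup A] [Module k A] (F : GFrobeniusAlgebra G k A)
    (p : H × G) : Submodule k (H → A) where
  carrier := {f | f p.1 ∈ F.grading p.2 ∧ ∀ b : H, b ≠ p.1 → f b = 0}
  add_mem' := by
    intro f f' hf hf'
    refine ⟨add_mem hf.1 hf'.1, fun b hb => ?_⟩
    simp [Pi.add_apply, hf.2 b hb, hf'.2 b hb]
  zero_mem' := ⟨zero_mem _, fun _ _ => rfl⟩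
  smul_mem' := by
    intro c f hf
    refine ⟨Submodule.smul_mem _ _ hf.1, fun b hb => ?_⟩
    simp [Pi.smul_apply, hf.2 b hb]

/-- The unit `1 ⊗ e_H` of `A^{α'}`; also the lifting map `i : A → A^{α'}`, `x ↦ x ⊗ e_H`,
is `crossedIota F x`. -/
noncomputable def crossedIota {H : Type} [CommGroup H] [DecidableEq H]
    {A : Type} [AddCommGroup A] (x : A) : H → A := fun b =>
  if b = 1 then x else 0

/-- The push-down map `res : A^{α'} → A`, `x ⊗ a ↦ χ(a)·x`, associated to a character
`χ : H → kˣ`. -/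
noncomputable def crossedRes {H : Type} [CommGroup H] [Fintype H] {k : Type} [Field k]
    {A : Type} [AddCommGroup A] [Module k A] (χH : H →* kˣ) (f : H → A) : A :=
  ∑ a : H, ((χH a : kˣ) : k) • f a

/-!
The crossed product is spanned by the homogeneous elements `x ⊗ a` with `x ∈ A_g`, on which its
product is the product of `A` in the first factor together with the product of
`(a, g), (a', g') ∈ G^{α'}` in the second. The multiplication being bilinear, associativity and
the unit laws only need to be checked on such elements, where they follow from those of `A` and
of `G^{α'}`; for the latter they are the cocycle identity and its consequence
`α'(1, g) = 1 = α'(g, 1)`. Finally `res` replaces the factor `α'(g, g') ∈ H` of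
`i(x) · i(y)` by the scalar `χ(α'(g, g')) = α(g, g')`.
-/

section Cocycle

variable {G H : Type*} {α' : G → G → H}

theorem cocycle_one_left [MulOneClass G] [LeftCancelMonoid H]
    (hcoc : ∀ g h l : G, α' g h * α' (g * h) l = α' h l * α' g (h * l))
    (hnorm : α' 1 1 = 1) (g : G) : α' 1 g = 1 := by
  simpa [hnorm] using hcoc 1 1 g

theorem cocycle_one_right [MulOneClass G] [LeftCancelMonoid H]
    (hcoc : ∀ g h l : G, α' g h * α' (g * h) l = α' h l * α' g (h * l))
    (hnorm : α' 1 1 = 1) (g : G) : α' g 1 = 1 := by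
  simpa [hnorm] using hcoc g 1 1

/-- The multiplication of the central extension `G^{α'}`, whose underlying set is `H × G`. It is
an operation rather than a `Mul` instance because `H × G` already carries the direct product
structure. -/
def centralExtensionMul [Mul G] [Mul H] (α' : G → G → H) (p q : H × G) : H × G :=
  (p.1 * q.1 * α' p.2 q.2, p.2 * q.2)

theorem centralExtensionMul_assoc [Semigroup G] [CommSemigroup H]
    (hcoc : ∀ g h l : G, α' g h * α' (g * h) l = α' h l * α' g (h * l)) (p q r : H × G) :
    centralExtensionMul α' (centralExtensionMul α' p q) r
      = centralExtensionMul α' p (centralExtensionMul α' q r) := by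
  obtain ⟨⟨a, g⟩, ⟨b, h⟩, ⟨c, l⟩⟩ := p, q, r
  refine Prod.ext ?_ (mul_assoc g h l)
  calc a * b * α' g h * c * α' (g * h) l
      = a * b * c * (α' g h * α' (g * h) l) := by ac_rfl
    _ = a * b * c * (α' h l * α' g (h * l)) := by rw [hcoc]
    _ = a * (b * c * α' h l) * α' g (h * l) := by ac_rfl

theorem one_centralExtensionMul [MulOneClass G] [LeftCancelMonoid H]
    (hcoc : ∀ g h l : G, α' g h * α' (g * h) l = α' h l * α' g (h * l))
    (hnorm : α' 1 1 = 1) (p : H × G) : centralExtensionMul α' 1 p = p := by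
  simp [centralExtensionMul, cocycle_one_left hcoc hnorm]

theorem centralExtensionMul_one [MulOneClass G] [LeftCancelMonoid H]
    (hcoc : ∀ g h l : G, α' g h * α' (g * h) l = α' h l * α' g (h * l))
    (hnorm : α' 1 1 = 1) (p : H × G) : centralExtensionMul α' p 1 = p := by
  simp [centralExtensionMul, cocycle_one_right hcoc hnorm]

end Cocycle

section CrossedProduct

variable {G : Type} [Group G] [Fintype G] {H : Type} [DecidableEq H]
  {k : Type} [Field k] {A : Type} [AddCommGroup A] [Module k A]

theorem crossedIota_eq_single [CommGroup H] (x : A) : (crossedIota x : H → A) = Pi.single 1 x := by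
  ext b
  simp only [crossedIota, Pi.single_apply]

theorem crossedRes_single [CommGroup H] [Fintype H] (χH : H →* kˣ) (a : H) (x : A) :
    crossedRes χH (Pi.single a x) = (χH a : k) • x := by
  simp [crossedRes, Pi.single_apply]

variable [CharZero k] (F : GFrobeniusAlgebra G k A)

theorem mem_crossedGrading_iff_exists_single [CommGroup H] {p : H × G} {f : H → A} :
    f ∈ crossedGrading F p ↔ ∃ x ∈ F.grading p.2, Pi.single p.1 x = f := by
  constructor
  · rintro ⟨hmem, hsupp⟩
    refine ⟨f p.1, hmem, funext fun b => ?_⟩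
    obtain rfl | hb := eq_or_ne b p.1
    · exact Pi.single_eq_same _ _
    · rw [Pi.single_eq_of_ne hb, hsupp b hb]
  · rintro ⟨x, hx, rfl⟩
    exact ⟨by rwa [Pi.single_eq_same], fun b hb => by rw [Pi.single_eq_of_ne hb]⟩

theorem crossedIota_mem_crossedGrading [CommGroup H] {g : G} {x : A} (hx : x ∈ F.grading g) :
    crossedIota x ∈ crossedGrading F ((1 : H), g) :=
  (mem_crossedGrading_iff_exists_single F).2 ⟨x, hx, (crossedIota_eq_single x).symm⟩

theorem GFrobeniusAlgebra.linearMap_ext {M : Type*} [AddCommMonoid M] [Module k M]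
    {φ ψ : A →ₗ[k] M} (h : ∀ g, ∀ x ∈ F.grading g, φ x = ψ x) : φ = ψ := by
  ext x
  rw [← F.sum_proj x, map_sum, map_sum]
  exact Finset.sum_congr rfl fun g _ => h g _ (F.proj_mem g x)

theorem GFrobeniusAlgebra.linearMap_ext_crossedProduct [Finite H]
    {M : Type*} [AddCommMonoid M] [Module k M] {φ ψ : (H → A) →ₗ[k] M}
    (h : ∀ p : H × G, ∀ x ∈ F.grading p.2, φ (Pi.single p.1 x) = ψ (Pi.single p.1 x)) :
    φ = ψ :=
  LinearMap.pi_ext' fun a => F.linearMap_ext fun g x hx => h (a, g) x hx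

variable [CommGroup H] [Fintype H]

/-- `crossedMul` as a bundled bilinear map, so that identities in `A^{α'}` become equalities of
linear maps. Each summand takes the `(a, g)`- and `(a', g')`-components, multiplies them in `A`
and places the result at position `a * a' * α' g g'`. -/
noncomputable def crossedMulBilin (α' : G → G → H) :
    (H → A) →ₗ[k] (H → A) →ₗ[k] (H → A) :=
  ∑ a : H, ∑ a' : H, ∑ g : G, ∑ g' : G,
    (F.mul.compl₁₂ (F.proj g ∘ₗ LinearMap.proj a) (F.proj g' ∘ₗ LinearMap.proj a')).compr₂
      (LinearMap.single k (fun _ => A) (a * a' * α' g g'))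

theorem crossedMulBilin_apply (α' : G → G → H) (f f' : H → A) :
    crossedMulBilin F α' f f' = crossedMul F α' f f' := by
  ext b
  simp [crossedMulBilin, crossedMul, LinearMap.sum_apply, Finset.sum_apply, Pi.single_apply,
    eq_comm]

theorem crossedMul_single (α' : G → G → H) {p q : H × G} {x y : A}
    (hx : x ∈ F.grading p.2) (hy : y ∈ F.grading q.2) :
    crossedMul F α' (Pi.single p.1 x) (Pi.single q.1 y)
      = Pi.single (centralExtensionMul α' p q).1 (F.mul x y) := by
  ext b
  unfold crossedMul
  rw [Fintype.sum_eq_single p.1 fun c hc => by simp [hc],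
    Fintype.sum_eq_single q.1 fun c hc => by simp [hc],
    Fintype.sum_eq_single p.2 fun l hl => by simp [F.proj_of_ne _ l hl.symm x hx],
    Fintype.sum_eq_single q.2 fun l hl => by simp [F.proj_of_ne _ l hl.symm y hy]]
  simp [centralExtensionMul, Pi.single_apply, F.proj_of_mem _ x hx, F.proj_of_mem _ y hy, eq_comm]

theorem crossedMul_mem_crossedGrading (α' : G → G → H) {p q : H × G} {f f' : H → A}
    (hf : f ∈ crossedGrading F p) (hf' : f' ∈ crossedGrading F q) :
    crossedMul F α' f f' ∈ crossedGrading F (centralExtensionMul α' p q) := by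
  rw [mem_crossedGrading_iff_exists_single] at hf hf' ⊢
  obtain ⟨⟨x, hx, rfl⟩, ⟨y, hy, rfl⟩⟩ := hf, hf'
  exact ⟨F.mul x y, F.mul_mem _ _ x hx y hy, (crossedMul_single F α' hx hy).symm⟩

theorem crossedRes_crossedMul_crossedIota (α' : G → G → H) (χH : H →* kˣ) {g g' : G} {x y : A}
    (hx : x ∈ F.grading g) (hy : y ∈ F.grading g') :
    crossedRes χH (crossedMul F α' (crossedIota x) (crossedIota y))
      = (χH (α' g g') : k) • F.mul x y := by
  have hmul := crossedMul_single F α' (p := (1, g)) (q := (1, g')) hx hy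
  rw [crossedIota_eq_single, crossedIota_eq_single, hmul, crossedRes_single, centralExtensionMul,
    one_mul, one_mul]

variable {α' : G → G → H}

theorem crossedMul_assoc
    (hcoc : ∀ g h l : G, α' g h * α' (g * h) l = α' h l * α' g (h * l)) (f₁ f₂ f₃ : H → A) :
    crossedMul F α' (crossedMul F α' f₁ f₂) f₃
      = crossedMul F α' f₁ (crossedMul F α' f₂ f₃) := by
  let μ := crossedMulBilin F α'
  have trilinear : μ.compr₂ μ = (LinearMap.llcomp k _ _ _ ∘ₗ μ).compl₂ μ := by
    refine F.linearMap_ext_crossedProduct fun p x hx =>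
      F.linearMap_ext_crossedProduct fun q y hy => F.linearMap_ext_crossedProduct fun r z hz => ?_
    change μ (μ (Pi.single p.1 x) (Pi.single q.1 y)) (Pi.single r.1 z)
      = μ (Pi.single p.1 x) (μ (Pi.single q.1 y) (Pi.single r.1 z))
    have hxy : F.mul x y ∈ F.grading (centralExtensionMul α' p q).2 := F.mul_mem _ _ x hx y hy
    have hyz : F.mul y z ∈ F.grading (centralExtensionMul α' q r).2 := F.mul_mem _ _ y hy z hz
    simp only [μ, crossedMulBilin_apply]
    rw [crossedMul_single F α' hx hy, crossedMul_single F α' hxy hz,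
      crossedMul_single F α' hy hz, crossedMul_single F α' hx hyz,
      centralExtensionMul_assoc hcoc, F.mul_assoc']
  simpa only [μ, LinearMap.compr₂_apply, LinearMap.compl₂_apply, LinearMap.comp_apply,
    LinearMap.llcomp_apply, crossedMulBilin_apply] using
    LinearMap.congr_fun (LinearMap.congr_fun₂ trilinear f₁ f₂) f₃

theorem crossedIota_one_crossedMul
    (hcoc : ∀ g h l : G, α' g h * α' (g * h) l = α' h l * α' g (h * l))
    (hnorm : α' 1 1 = 1) (f : H → A) : crossedMul F α' (crossedIota F.one) f = f := by
  have mul_eq_id : crossedMulBilin F α' (crossedIota F.one) = LinearMap.id := by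
    refine F.linearMap_ext_crossedProduct fun p x hx => ?_
    have hmul := crossedMul_single F α' (p := 1) F.one_mem hx
    rw [one_centralExtensionMul hcoc hnorm, F.one_mul'] at hmul
    rw [crossedMulBilin_apply, crossedIota_eq_single, LinearMap.id_apply]
    exact hmul
  rw [← crossedMulBilin_apply, mul_eq_id, LinearMap.id_apply]

theorem crossedMul_crossedIota_one
    (hcoc : ∀ g h l : G, α' g h * α' (g * h) l = α' h l * α' g (h * l))
    (hnorm : α' 1 1 = 1) (f : H → A) : crossedMul F α' f (crossedIota F.one) = f := by
  have mul_eq_id : (crossedMulBilin F α').flip (crossedIota F.one) = LinearMap.id := by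
    refine F.linearMap_ext_crossedProduct fun p x hx => ?_
    have hmul := crossedMul_single F α' (q := 1) hx F.one_mem
    rw [centralExtensionMul_one hcoc hnorm, F.mul_one'] at hmul
    rw [LinearMap.flip_apply, crossedMulBilin_apply, crossedIota_eq_single, LinearMap.id_apply]
    exact hmul
  rw [← crossedMulBilin_apply, ← LinearMap.flip_apply, mul_eq_id, LinearMap.id_apply]

end CrossedProduct

/-- Let `α' : G × G → H` be a normalized 2-cocycle with values in a finite
abelian group `H`, `χ : H → kˣ` a character, and `α := χ ∘ α'` its transgression. For any
`G`-Frobenius algebra `A`, the crossed product `A^{α'} = ⊕_{(a,g) ∈ H×G} A_g ⊗ k·a` with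
multiplication `(x⊗a)(y⊗a') = (x·y)⊗(a·a'·α'(g,g'))`:
(i) is a `G^{α'}`-graded associative unital `k`-algebra with unit `1 ⊗ e_H`, the grading
being over `G^{α'} = H × G` with `(a,g)·(a',g') = (a·a'·α'(g,g'), g·g')`;
(ii) satisfies `res(i(x)·i(y)) = α(g,g')·(x·y)` for homogeneous `x ∈ A_g`, `y ∈ A_{g'}`,
i.e. the discrete-torsion twist `A_α` lifts to `A^{α'}`. -/
theorem crossed_product_lifts_twist (G : Type) [Group G] [Fintype G]
    (H : Type) [CommGroup H] [Fintype H] [DecidableEq H]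
    (k : Type) [Field k] [CharZero k]
    (A : Type) [AddCommGroup A] [Module k A] (F : GFrobeniusAlgebra G k A)
    (α' : G → G → H)
    (hcoc : ∀ g h l : G, α' g h * α' (g * h) l = α' h l * α' g (h * l))
    (hnorm : α' 1 1 = 1)
    (χH : H →* kˣ)
    (α : G → G → kˣ) (hα : ∀ g g' : G, α g g' = χH (α' g g')) :
    -- (i) `A^{α'}` is a `G^{α'}`-graded associative unital `k`-algebra:
    -- the multiplication is `k`-bilinear,
    ((∀ f₁ f₂ f₃ : H → A,
        crossedMul F α' (f₁ + f₂) f₃ = crossedMul F α' f₁ f₃ + crossedMul F α' f₂ f₃) ∧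
      (∀ f₁ f₂ f₃ : H → A,
        crossedMul F α' f₁ (f₂ + f₃) = crossedMul F α' f₁ f₂ + crossedMul F α' f₁ f₃) ∧
      (∀ (c : k) (f₁ f₂ : H → A),
        crossedMul F α' (c • f₁) f₂ = c • crossedMul F α' f₁ f₂) ∧
      (∀ (c : k) (f₁ f₂ : H → A),
        crossedMul F α' f₁ (c • f₂) = c • crossedMul F α' f₁ f₂) ∧
      -- associative,
      (∀ f₁ f₂ f₃ : H → A,
        crossedMul F α' (crossedMul F α' f₁ f₂) f₃
          = crossedMul F α' f₁ (crossedMul F α' f₂ f₃)) ∧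
      -- unital with unit `1 ⊗ e_H`,
      (crossedIota F.one ∈ crossedGrading F ((1 : H), (1 : G))) ∧
      (∀ f : H → A, crossedMul F α' (crossedIota F.one) f = f) ∧
      (∀ f : H → A, crossedMul F α' f (crossedIota F.one) = f) ∧
      -- and respects the `G^{α'} = H × G` grading:
      (∀ p q : H × G, ∀ f ∈ crossedGrading F p, ∀ f' ∈ crossedGrading F q,
        crossedMul F α' f f'
          ∈ crossedGrading F (p.1 * q.1 * α' p.2 q.2, p.2 * q.2))) ∧
    -- (ii) the twist `A_α` lifts to `A^{α'}`: `res ∘ μ^{α'} ∘ (i ⊗ i)` is the twisted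
    -- multiplication of `A_α`
    (∀ g g' : G, ∀ x ∈ F.grading g, ∀ y ∈ F.grading g',
      crossedRes χH (crossedMul F α' (crossedIota x) (crossedIota y))
        = ((α g g' : kˣ) : k) • F.mul x y) := by
  have bilin : ∀ f f' : H → A, crossedMul F α' f f' = crossedMulBilin F α' f f' :=
    fun f f' => (crossedMulBilin_apply F α' f f').symm
  refine ⟨⟨?add_left, ?add_right, ?smul_left, ?smul_right, crossedMul_assoc F hcoc,
    crossedIota_mem_crossedGrading F F.one_mem, crossedIota_one_crossedMul F hcoc hnorm,
    crossedMul_crossedIota_one F hcoc hnorm,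
    fun _ _ _ hf _ hf' => crossedMul_mem_crossedGrading F α' hf hf'⟩, ?lift⟩
  case add_left => simp only [bilin, LinearMap.map_add₂, implies_true]
  case add_right => simp only [bilin, map_add, implies_true]
  case smul_left => simp only [bilin, LinearMap.map_smul₂, implies_true]
  case smul_right => simp only [bilin, map_smul, implies_true]
  case lift =>
    intro g g' x hx y hy
    rw [hα]
    exact crossedRes_crossedMul_crossedIota F α' χH hx hy
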